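/- arXiv:2004.14715 — 5 statements merged into one kernel-verified Lean document; each statement's English description precedes it below -/
import Mathlib

section
/- For every real number α > 1 and every q ∈ [0,1], the maximum of the two ratios (1+α)/(q·α + (1−q)·(1+α)) and 2α/(q·2α + (1−q)·(1+α)) is at least (α² + 2α − 1)/(α² + α). -/
/-! By Yao's principle it is enough to find a good mixed strategy for the adversary. Play `σ₁` and
`σ₂` with weights `α - 1` and `1`. With these weights the dependence on `q` cancels: every
algorithm earns `α ^ 2 + α` in total, whereas the weighted optimum is
`(α - 1) * (1 + α) + 2 * α = α ^ 2 + 2 * α - 1`. The quotient of the weighted sums is at most the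
larger of the two ratios. -/

/-- The expected profit of an algorithm that schedules the heavy job first with probability `q`,
on an instance where doing so yields the profit `heavy` and starting with the light job yields
`light`. -/
abbrev expectedProfit {R : Type*} [Ring R] (q heavy light : R) : R :=
  q * heavy + (1 - q) * light

theorem expectedProfit_pos {R : Type*} [Ring R] [PartialOrder R] [IsStrictOrderedRing R]
    {q heavy light : R} (hq0 : 0 ≤ q) (hq1 : q ≤ 1) (hheavy : 0 < heavy) (hlight : 0 < light) :
    0 < expectedProfit q heavy light :=
  convex_Ioi (0 : R) hheavy hlight hq0 (sub_nonneg.2 hq1) (add_sub_cancel q 1)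

theorem weighted_expectedProfit_eq {R : Type*} [CommRing R] (α q : R) :
    (α - 1) * expectedProfit q α (1 + α) + 1 * expectedProfit q (2 * α) (1 + α) = α ^ 2 + α := by
  ring

section OrderedField

variable {K : Type*} [Field K] [LinearOrder K] [IsStrictOrderedRing K]

theorem mul_add_mul_div_mul_add_mul_le_max {a b c d v w : K} (hc : 0 < c) (hd : 0 < d)
    (hv : 0 ≤ v) (hw : 0 ≤ w) (hvw : 0 < v * c + w * d) :
    (v * a + w * b) / (v * c + w * d) ≤ max (a / c) (b / d) := by
  have ha : a ≤ max (a / c) (b / d) * c := (div_le_iff₀ hc).1 (le_max_left _ _)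
  have hb : b ≤ max (a / c) (b / d) * d := (div_le_iff₀ hd).1 (le_max_right _ _)
  rw [div_le_iff₀ hvw]
  calc
    v * a + w * b ≤ v * (max (a / c) (b / d) * c) + w * (max (a / c) (b / d) * d) := by gcongr
    _ = max (a / c) (b / d) * (v * c + w * d) := by ring

theorem stmt_0_general {α q : K} (hα : 1 ≤ α) (hq0 : 0 ≤ q) (hq1 : q ≤ 1) :
    (α ^ 2 + 2 * α - 1) / (α ^ 2 + α) ≤
      max ((1 + α) / expectedProfit q α (1 + α))
          ((2 * α) / expectedProfit q (2 * α) (1 + α)) := by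
  have hα0 : 0 < α := one_pos.trans_le hα
  have profit₁_pos : 0 < expectedProfit q α (1 + α) :=
    expectedProfit_pos hq0 hq1 hα0 (by positivity)
  have profit₂_pos : 0 < expectedProfit q (2 * α) (1 + α) :=
    expectedProfit_pos hq0 hq1 (by positivity) (by positivity)
  have weighted_profit_pos :
      0 < (α - 1) * expectedProfit q α (1 + α) + 1 * expectedProfit q (2 * α) (1 + α) := by
    rw [weighted_expectedProfit_eq]
    positivity
  have weighted_optimum_eq : (α - 1) * (1 + α) + 1 * (2 * α) = α ^ 2 + 2 * α - 1 := by ring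
  rw [← weighted_optimum_eq, ← weighted_expectedProfit_eq α q]
  exact mul_add_mul_div_mul_add_mul_le_max profit₁_pos profit₂_pos
    (sub_nonneg.2 hα) zero_le_one weighted_profit_pos

end OrderedField

theorem stmt_0 (α q : ℝ) (hα : 1 < α) (hq0 : 0 ≤ q) (hq1 : q ≤ 1) :
    (α ^ 2 + 2 * α - 1) / (α ^ 2 + α) ≤
      max ((1 + α) / (q * α + (1 - q) * (1 + α)))
          ((2 * α) / (q * (2 * α) + (1 - q) * (1 + α))) :=
  stmt_0_general hα.le hq0 hq1
end

section
/- For every real number α ≥ 1 and all nonnegative real numbers h, h*, ℓ, d satisfying d + h* ≤ h, the inequality ((α² − 1)/(α² + α))·(h·α + h*·α + ℓ) + ((2α)/(α² + α))·(h·α + h* + ℓ + d) ≥ h·α + h*·α + ℓ + d holds. -/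
/-!
Both weights have denominator `α² + α`, and their sum exceeds `1` by `(α - 1) / (α² + α)`. So the
weighted profits gain `(α - 1) / (α² + α)` per unit of common profit `h * α + ℓ`. Each unit of
`hstar` or `d`, credited in full to only one of the two algorithms, costs
`α * (α - 1) / (α² + α)`. Hence the gain covers the loss once `α * (d + hstar) ≤ α * h + ℓ`.
-/

section BarelyRandom

variable {K : Type*} [Field K]

theorem weighted_profit_sub_opt_bound {α : K} (hα : α ^ 2 + α ≠ 0) (h hstar ℓ d : K) :
    ((α ^ 2 - 1) / (α ^ 2 + α)) * (h * α + hstar * α + ℓ) +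
        ((2 * α) / (α ^ 2 + α)) * (h * α + hstar + ℓ + d) -
        (h * α + hstar * α + ℓ + d) =
      (α - 1) / (α ^ 2 + α) * (α * h + ℓ - α * (d + hstar)) := by
  linear_combination (h * α + hstar * α + ℓ + d) * mul_inv_cancel₀ hα

theorem stmt_5_general [LinearOrder K] [IsStrictOrderedRing K] {α h hstar ℓ d : K} (hα : 1 ≤ α)
    (hcover : α * (d + hstar) ≤ α * h + ℓ) :
    ((α ^ 2 - 1) / (α ^ 2 + α)) * (h * α + hstar * α + ℓ) +
      ((2 * α) / (α ^ 2 + α)) * (h * α + hstar + ℓ + d) ≥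
      h * α + hstar * α + ℓ + d := by
  have hα_pos : 0 < α := zero_lt_one.trans_le hα
  have hdenom : 0 < α ^ 2 + α := add_pos (pow_pos hα_pos 2) hα_pos
  rw [ge_iff_le, ← sub_nonneg, weighted_profit_sub_opt_bound hdenom.ne']
  exact mul_nonneg (div_nonneg (sub_nonneg.2 hα) hdenom.le) (sub_nonneg.2 hcover)

end BarelyRandom

theorem stmt_5 (α h hstar ℓ d : ℝ) (hα : 1 ≤ α)
    (hh : 0 ≤ h) (hhstar : 0 ≤ hstar) (hℓ : 0 ≤ ℓ) (hd : 0 ≤ d)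
    (hclaim : d + hstar ≤ h) :
    ((α ^ 2 - 1) / (α ^ 2 + α)) * (h * α + hstar * α + ℓ) +
      ((2 * α) / (α ^ 2 + α)) * (h * α + hstar + ℓ + d) ≥
      h * α + hstar * α + ℓ + d :=
  stmt_5_general hα <|
    le_add_of_le_of_nonneg (mul_le_mul_of_nonneg_left hclaim (zero_le_one.trans hα)) hℓ
end

section
/- For every real number α ≥ 1 and all nonnegative real numbers h, h*, ℓ, d satisfying d + h* ≤ h, setting p = (α² − 1)/(α² + 2α − 1) and R = (α² + 2α − 1)/(α² + α), one has R·( p·(h*·α + h·α + ℓ) + (1 − p)·(h·α + ℓ + h* + d) ) ≥ h*·α + h·α + ℓ + d. -/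
/-!
After multiplication by `α ^ 2 + α`, the randomized profit weighs the profits of Greedy and PEDF by
`α ^ 2 - 1` and `2 * α`. With these weights the difference between that profit and the scaled bound
on the optimum gives `d` and `h*` the same coefficient and `h` the opposite one: it equals
`(α - 1) * (α * (h - (d + h*)) + ℓ)`, which the claim `d + h* ≤ h` makes nonnegative.
-/

theorem div_mul_mixture_eq {K : Type*} [Field K] {s : K} (hs : s ≠ 0) (a c x y : K) :
    s / c * (a / s * x + (1 - a / s) * y) = (a * x + (s - a) * y) / c := by
  have hscale : s * (a / s * x + (1 - a / s) * y) = a * x + (s - a) * y := by field_simp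
  rw [div_mul_eq_mul_div, hscale]

theorem weighted_profit_sub_mul_opt_bound_eq {A : Type*} [CommRing A] (α h hstar ℓ d : A) :
    (α ^ 2 - 1) * (hstar * α + h * α + ℓ) + 2 * α * (h * α + ℓ + hstar + d) -
        (α ^ 2 + α) * (hstar * α + h * α + ℓ + d) =
      (α - 1) * (α * (h - (d + hstar)) + ℓ) := by
  ring

theorem mul_opt_bound_le_weighted_profit {A : Type*} [CommRing A] [PartialOrder A] [IsOrderedRing A]
    {α h hstar ℓ d : A} (hα : 1 ≤ α) (hℓ : 0 ≤ ℓ) (hclaim : d + hstar ≤ h) :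
    (α ^ 2 + α) * (hstar * α + h * α + ℓ + d) ≤
      (α ^ 2 - 1) * (hstar * α + h * α + ℓ) + 2 * α * (h * α + ℓ + hstar + d) := by
  have hα₀ : 0 ≤ α := zero_le_one.trans hα
  rw [← sub_nonneg, weighted_profit_sub_mul_opt_bound_eq]
  exact mul_nonneg (sub_nonneg.2 hα) (add_nonneg (mul_nonneg hα₀ (sub_nonneg.2 hclaim)) hℓ)

theorem stmt_6_general {K : Type*} [Field K] [LinearOrder K] [IsStrictOrderedRing K]
    (α h hstar ℓ d : K) (hα : 1 ≤ α) (hℓ : 0 ≤ ℓ) (hclaim : d + hstar ≤ h) :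
    let p := (α ^ 2 - 1) / (α ^ 2 + 2 * α - 1)
    let R := (α ^ 2 + 2 * α - 1) / (α ^ 2 + α)
    R * (p * (hstar * α + h * α + ℓ) + (1 - p) * (h * α + ℓ + hstar + d)) ≥
      hstar * α + h * α + ℓ + d := by
  intro p R
  have hα₀ : 0 < α := zero_lt_one.trans_le hα
  have hR_denom : 0 < α ^ 2 + α := add_pos (pow_pos hα₀ 2) hα₀
  have hp_denom : 0 < α ^ 2 + 2 * α - 1 := by linarith [sq_nonneg α]
  have pedf_weight : α ^ 2 + 2 * α - 1 - (α ^ 2 - 1) = 2 * α := by ring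
  rw [ge_iff_le, div_mul_mixture_eq hp_denom.ne', pedf_weight, le_div_iff₀' hR_denom]
  exact mul_opt_bound_le_weighted_profit hα hℓ hclaim

theorem stmt_6 (α h hstar ℓ d : ℝ) (hα : 1 ≤ α)
    (hh : 0 ≤ h) (hhstar : 0 ≤ hstar) (hℓ : 0 ≤ ℓ) (hd : 0 ≤ d)
    (hclaim : d + hstar ≤ h) :
    let p := (α ^ 2 - 1) / (α ^ 2 + 2 * α - 1)
    let R := (α ^ 2 + 2 * α - 1) / (α ^ 2 + α)
    R * (p * (hstar * α + h * α + ℓ) + (1 - p) * (h * α + ℓ + hstar + d)) ≥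
      hstar * α + h * α + ℓ + d :=
  stmt_6_general α h hstar ℓ d hα hℓ hclaim
end

section
/- For every real number α > 1, the strict inequality min(1, log α) > (α² − 1)/(α² + 2α − 1) holds, where log denotes the natural logarithm. -/
/-!
The classical bound `1 - 1 / α ≤ log α` already separates the two sides: `1 - 1 / α` is
also less than `1`, and its excess over `(α ^ 2 - 1) / (α ^ 2 + 2 * α - 1)` is a perfect square
divided by a positive quantity.
-/

theorem one_sub_inv_sub_sq_sub_one_div {K : Type*} [Field K] {a : K} (ha : a ≠ 0)
    (hden : a ^ 2 + 2 * a - 1 ≠ 0) :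
    1 - a⁻¹ - (a ^ 2 - 1) / (a ^ 2 + 2 * a - 1) =
      (a - 1) ^ 2 / (a * (a ^ 2 + 2 * a - 1)) := by
  rw [inv_eq_one_div, one_sub_div ha, div_sub_div _ _ ha hden]
  congr 1
  ring

theorem sq_sub_one_div_lt_one_sub_inv {K : Type*} [Field K] [LinearOrder K] [IsStrictOrderedRing K]
    {a : K} (ha : 0 < a) (ha_ne_one : a ≠ 1) (hden : 0 < a ^ 2 + 2 * a - 1) :
    (a ^ 2 - 1) / (a ^ 2 + 2 * a - 1) < 1 - a⁻¹ := by
  rw [← sub_pos, one_sub_inv_sub_sq_sub_one_div ha.ne' hden.ne']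
  exact div_pos (sq_pos_of_ne_zero (sub_ne_zero.2 ha_ne_one)) (mul_pos ha hden)

theorem one_sub_inv_le_min_one_log {x : ℝ} (hx : 0 < x) : 1 - x⁻¹ ≤ min 1 (Real.log x) :=
  le_min (sub_le_self 1 (inv_nonneg.2 hx.le)) (Real.one_sub_inv_le_log_of_pos hx)

theorem sq_add_two_mul_sub_one_pos {x : ℝ} (hx : √2 - 1 < x) : 0 < x ^ 2 + 2 * x - 1 := by
  have hsq : 2 < (x + 1) ^ 2 := Real.lt_sq_of_sqrt_lt (sub_lt_iff_lt_add.1 hx)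
  linarith

theorem stmt_12_general {α : ℝ} (hα : √2 - 1 < α) (hα_ne_one : α ≠ 1) :
    min 1 (Real.log α) > (α ^ 2 - 1) / (α ^ 2 + 2 * α - 1) := by
  have hpos : 0 < α := (sub_pos.2 Real.one_lt_sqrt_two).trans hα
  calc (α ^ 2 - 1) / (α ^ 2 + 2 * α - 1)
      < 1 - α⁻¹ :=
        sq_sub_one_div_lt_one_sub_inv hpos hα_ne_one (sq_add_two_mul_sub_one_pos hα)
    _ ≤ min 1 (Real.log α) := one_sub_inv_le_min_one_log hpos

theorem stmt_12 (α : ℝ) (hα : 1 < α) :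
    min 1 (Real.log α) > (α ^ 2 - 1) / (α ^ 2 + 2 * α - 1) :=
  stmt_12_general (by linarith [Real.sqrt_two_lt_three_halves]) hα.ne'
end

section
/- Let J be a finite set of jobs and d : J → ℕ assign to each job a deadline with d(j) ≥ 1 for all j ∈ J. Then there exists an injective function σ : J → ℕ with σ(j) < d(j) for every j ∈ J if and only if for every t ∈ ℕ, the number of jobs j ∈ J with d(j) ≤ t is at most t. -/
/-!
Jobs with deadlines have nested sets of admissible slots, so Hall's condition for a finite set of
jobs reduces to a single horizon, the latest deadline `t` in the set: all its jobs are due by `t`,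
while the slots available to them are exactly those available to a job due at `t`.
-/

section NestedSlots

variable {ι α τ : Type*} {d : ι → τ} {F : τ → Finset α}

theorem encard_setOf_le_le_card_of_injective [Preorder τ] (hF : Monotone F) {σ : ι → α}
    (hσ : Function.Injective σ) (hmem : ∀ j, σ j ∈ F (d j)) (t : τ) :
    {j | d j ≤ t}.encard ≤ (F t).card := by
  have hmaps : Set.MapsTo σ {j | d j ≤ t} (F t) := fun j hj ↦ hF hj (hmem j)
  rw [← Set.encard_coe_eq_coe_finsetCard]
  exact Set.encard_le_encard_of_injOn hmaps hσ.injOn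

theorem card_le_card_biUnion_of_encard_setOf_le_le_card [LinearOrder τ] [DecidableEq α]
    (h : ∀ t, {j | d j ≤ t}.encard ≤ (F t).card) (s : Finset ι) :
    s.card ≤ (s.biUnion fun j ↦ F (d j)).card := by
  rcases s.eq_empty_or_nonempty with rfl | hs
  · simp
  obtain ⟨m, hm, hlatest⟩ := s.exists_max_image d hs
  have hcard : s.card ≤ (F (d m)).card := by
    have hsub : (s : Set ι) ⊆ {j | d j ≤ d m} := hlatest
    have hencard := (Set.encard_le_encard hsub).trans (h (d m))
    rwa [Set.encard_coe_eq_coe_finsetCard, Nat.cast_le] at hencard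
  exact hcard.trans (Finset.card_le_card (Finset.subset_biUnion_of_mem (fun j ↦ F (d j)) hm))

theorem exists_injective_forall_mem_iff_encard_setOf_le_le_card [LinearOrder τ]
    (hF : Monotone F) :
    (∃ σ : ι → α, Function.Injective σ ∧ ∀ j, σ j ∈ F (d j)) ↔
      ∀ t, {j | d j ≤ t}.encard ≤ (F t).card := by
  classical
  constructor
  · rintro ⟨σ, hσ, hmem⟩
    exact encard_setOf_le_le_card_of_injective hF hσ hmem
  · intro h
    exact (Finset.all_card_le_biUnion_card_iff_exists_injective _).mp
      (card_le_card_biUnion_of_encard_setOf_le_le_card h)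

end NestedSlots

theorem stmt_13_general {J : Type*} (d : J → ℕ) :
    (∃ σ : J → ℕ, Function.Injective σ ∧ ∀ j, σ j < d j) ↔
      ∀ t : ℕ, {j | d j ≤ t}.encard ≤ t := by
  simpa only [Finset.mem_range, Finset.card_range] using
    exists_injective_forall_mem_iff_encard_setOf_le_le_card (d := d) Finset.range_mono

theorem stmt_13 {J : Type*} [Fintype J] (d : J → ℕ) (hd : ∀ j, 1 ≤ d j) :
    (∃ σ : J → ℕ, Function.Injective σ ∧ ∀ j, σ j < d j) ↔
      ∀ t : ℕ, (Finset.univ.filter (fun j => d j ≤ t)).card ≤ t := by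
  simpa only [← Finset.coe_filter_univ, Set.encard_coe_eq_coe_finsetCard, Nat.cast_le] using
    stmt_13_general d
end
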